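/- arXiv:2305.11535 — 6 statements merged into one kernel-verified Lean document; each statement's English description precedes it below -/
import Mathlib

section
/- Let S be a semigroup and let s, t ∈ S. If z is a weak inverse of s*t (i.e. z = z*(s*t)*z), then t*z is a weak inverse of s, z*s is a weak inverse of t, and z = (z*s)*(t*z); in particular W(s*t) ⊆ W(t)·W(s). -/
/-- In a semigroup, `z` is a weak inverse of `s` if `z = z * s * z`. -/
def IsWeakInverse {S : Type*} [Semigroup S] (z s : S) : Prop := z = z * s * z

namespace IsWeakInverse

variable {S : Type*} [Semigroup S] {s t z : S}

theorem eq_mul_mul_mul (hz : IsWeakInverse z (s * t)) : z = (z * s) * (t * z) :=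
  calc
    z = z * (s * t) * z := hz
    _ = (z * s) * (t * z) := by simp only [mul_assoc]

theorem mul_left (hz : IsWeakInverse z (s * t)) : IsWeakInverse (t * z) s :=
  calc
    t * z = t * ((z * s) * (t * z)) := congrArg (t * ·) hz.eq_mul_mul_mul
    _ = (t * z) * s * (t * z) := by simp only [mul_assoc]

theorem mul_right (hz : IsWeakInverse z (s * t)) : IsWeakInverse (z * s) t :=
  calc
    z * s = (z * s) * (t * z) * s := congrArg (· * s) hz.eq_mul_mul_mul
    _ = (z * s) * t * (z * s) := by simp only [mul_assoc]

end IsWeakInverse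

/-- If `z` is a weak inverse of `s * t`, then `t * z ∈ W(s)`, `z * s ∈ W(t)`,
and `z = (z * s) * (t * z)`; in particular `W(s*t) ⊆ W(t)·W(s)`. -/
theorem stmt0 {S : Type*} [Semigroup S] (s t z : S)
    (hz : IsWeakInverse z (s * t)) :
    IsWeakInverse (t * z) s ∧ IsWeakInverse (z * s) t ∧ z = (z * s) * (t * z) :=
  ⟨hz.mul_left, hz.mul_right, hz.eq_mul_mul_mul⟩
end

section
/- Let S be a semigroup and let s ∈ S with s ∉ Base(S). Then the 𝒥-class of s is trivial: for every t ∈ S, if s 𝒥 t then s = t. -/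
/-- `SPow S m` is the set of elements of `S` expressible as a product of `m`
elements of `S` (for `m ≥ 1`; `SPow S 0` is set to the whole of `S` by convention). -/
def SPow (S : Type*) [Semigroup S] : ℕ → Set S
  | 0 => Set.univ
  | 1 => Set.univ
  | (n + 2) => {x | ∃ a ∈ SPow S (n + 1), ∃ b : S, x = a * b}

/-- `Base S = ⋂_{m ≥ 1} S^m`. -/
def Base (S : Type*) [Semigroup S] : Set S := {x | ∀ m : ℕ, 1 ≤ m → x ∈ SPow S m}

/-- The principal two-sided ideal generated by `s`: `{s} ∪ Ss ∪ sS ∪ SsS`. -/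
def principalIdeal {S : Type*} [Semigroup S] (s : S) : Set S :=
  {s} ∪ {x | ∃ a : S, x = a * s} ∪ {x | ∃ a : S, x = s * a} ∪
    {x | ∃ a b : S, x = a * s * b}

section

variable {S : Type*} [Semigroup S]

theorem antitone_sPow : Antitone (SPow S) := by
  refine antitone_nat_of_succ_le fun n => ?_
  induction n using Nat.twoStepInduction with
  | zero | one => exact Set.subset_univ _
  | more n _ ih =>
    rintro _ ⟨a, ha, b, rfl⟩
    exact ⟨a, ih ha, b, rfl⟩

theorem mul_mem_sPow_succ_right {n : ℕ} {a : S} (ha : a ∈ SPow S n) (b : S) :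
    a * b ∈ SPow S (n + 1) := by
  cases n with
  | zero => exact Set.mem_univ _
  | succ n => exact ⟨a, ha, b, rfl⟩

theorem mul_mem_sPow_add {m n : ℕ} {a b : S} (ha : a ∈ SPow S m) (hb : b ∈ SPow S n) :
    a * b ∈ SPow S (m + n) := by
  induction n using Nat.twoStepInduction generalizing b with
  | zero => exact antitone_sPow m.le_succ (mul_mem_sPow_succ_right ha b)
  | one => exact mul_mem_sPow_succ_right ha b
  | more n _ ih =>
    obtain ⟨c, hc, d, rfl⟩ := hb
    rw [← mul_assoc]
    exact mul_mem_sPow_succ_right (ih hc) d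

theorem mul_mem_sPow_succ_left {n : ℕ} (a : S) {b : S} (hb : b ∈ SPow S n) :
    a * b ∈ SPow S (n + 1) := by
  have ha : a ∈ SPow S 1 := Set.mem_univ a
  simpa only [add_comm 1 n] using mul_mem_sPow_add ha hb

theorem self_mem_principalIdeal (s : S) : s ∈ principalIdeal s :=
  Or.inl (Or.inl (Or.inl rfl))

theorem mem_sPow_succ_of_mem_principalIdeal {s t : S} {n : ℕ} (hst : s ∈ principalIdeal t)
    (hne : s ≠ t) (ht : t ∈ SPow S n) : s ∈ SPow S (n + 1) := by
  rcases hst with ((rfl | ⟨a, rfl⟩) | ⟨b, rfl⟩) | ⟨a, b, rfl⟩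
  · exact absurd rfl hne
  · exact mul_mem_sPow_succ_left a ht
  · exact mul_mem_sPow_succ_right ht b
  · have hat : a * t ∈ SPow S (n + 1) := mul_mem_sPow_succ_left a ht
    exact antitone_sPow (n + 1).le_succ (mul_mem_sPow_succ_right hat b)

-- Each of `s` and `t` is a product with the other as a proper factor, so if both lie in `S ^ m`,
-- then both lie in `S ^ (m + 1)`. The hypotheses are symmetric, so one induction serves both.
theorem mem_base_of_mem_principalIdeal {s t : S} (hst : s ∈ principalIdeal t)
    (hts : t ∈ principalIdeal s) (hne : s ≠ t) : s ∈ Base S := by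
  suffices h : ∀ m, s ∈ SPow S m from fun m _ => h m
  intro m
  induction m generalizing s t with
  | zero => exact Set.mem_univ s
  | succ m ih => exact mem_sPow_succ_of_mem_principalIdeal hst hne (ih hts hst hne.symm)

end

/-- If `s ∉ Base(S)` then the 𝒥-class of `s` is trivial. -/
theorem stmt4 {S : Type*} [Semigroup S] (s : S) (h : s ∉ Base S) :
    ∀ t : S, principalIdeal s = principalIdeal t → s = t := by
  intro t hst
  by_contra hne
  have hs : s ∈ principalIdeal t := hst ▸ self_mem_principalIdeal s
  have ht : t ∈ principalIdeal s := hst ▸ self_mem_principalIdeal t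
  exact h (mem_base_of_mem_principalIdeal hs ht hne)
end

section
/- Let S be a semigroup with Base(S) ≠ ∅. Then S is E-dense if and only if the subsemigroup Base(S) is E-dense; that is, (for every s ∈ S there exists t ∈ S with s*t idempotent) if and only if (for every s ∈ Base(S) there exists t ∈ Base(S) with s*t idempotent). -/
section

variable {S : Type*} [Semigroup S]

theorem mul_mem_SPow (t : S) : ∀ (m : ℕ) {a : S}, a ∈ SPow S m → t * a ∈ SPow S m
  | 0, _, _ => Set.mem_univ _
  | 1, _, _ => Set.mem_univ _
  | n + 2, _, ⟨a, ha, b, hab⟩ =>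
    ⟨t * a, mul_mem_SPow t (n + 1) ha, b, by rw [hab, mul_assoc]⟩

theorem mem_SPow_of_isIdempotentElem {e : S} (he : IsIdempotentElem e) : ∀ m : ℕ, e ∈ SPow S m
  | 0 => Set.mem_univ _
  | 1 => Set.mem_univ _
  | n + 2 => ⟨e, mem_SPow_of_isIdempotentElem he (n + 1), e, he.eq.symm⟩

/-- `Base S` as a left ideal of `S`, the one-sided notion that `SemigroupIdeal` encodes; it feeds
the base into statements about arbitrary left ideals. -/
def baseIdeal (S : Type*) [Semigroup S] : SemigroupIdeal S where
  carrier := Base S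
  smul_mem' t _ ha m hm := mul_mem_SPow t m (ha m hm)

theorem mem_baseIdeal_of_isIdempotentElem {e : S} (he : IsIdempotentElem e) : e ∈ baseIdeal S :=
  fun m _ => mem_SPow_of_isIdempotentElem he m

theorem exists_mem_isIdempotentElem_mul {I : SemigroupIdeal S} {s t : S} (hI : s * t ∈ I)
    (hst : IsIdempotentElem (s * t)) : ∃ u ∈ I, IsIdempotentElem (s * u) := by
  refine ⟨t * (s * t), I.mul_mem t hI, ?_⟩
  rwa [← mul_assoc, hst.eq]

theorem stmt6_general (I : SemigroupIdeal S) (hne : (I : Set S).Nonempty)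
    (hidem : ∀ e : S, IsIdempotentElem e → e ∈ I) :
    (∀ s : S, ∃ t : S, IsIdempotentElem (s * t)) ↔
      ∀ s ∈ I, ∃ t ∈ I, IsIdempotentElem (s * t) := by
  constructor
  · intro h s _
    obtain ⟨t, hst⟩ := h s
    exact exists_mem_isIdempotentElem_mul (hidem _ hst) hst
  · intro h s
    obtain ⟨b, hb⟩ := hne
    obtain ⟨t, -, hsbt⟩ := h (s * b) (I.mul_mem s hb)
    exact ⟨b * t, by rwa [← mul_assoc]⟩

end

/-- For a semigroup with nonempty base, `S` is E-dense iff `Base(S)` is E-dense. -/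
theorem stmt6 {S : Type*} [Semigroup S] (hne : (Base S).Nonempty) :
    (∀ s : S, ∃ t : S, (s * t) * (s * t) = s * t) ↔
      (∀ s ∈ Base S, ∃ t ∈ Base S, (s * t) * (s * t) = s * t) :=
  stmt6_general (baseIdeal S) hne fun _ => mem_baseIdeal_of_isIdempotentElem
end

section
/- Let S be a semigroup and let T ⊆ S be a two-sided ideal (for all t ∈ T and s ∈ S, s*t ∈ T and t*s ∈ T) which is globally idempotent (every element of T is a product of two elements of T). Suppose there exists m ≥ 1 such that every product of m elements of S lies in T (i.e. S^m ⊆ T). Then S^n = T for all n ≥ m; in particular S^m = S^{m+1} and Base(S) = T, so S is a finitely stratified extension with base T. -/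
section

variable {S : Type*} [Semigroup S]

theorem sPow_succ_subset : ∀ n : ℕ, SPow S (n + 1) ⊆ SPow S n
  | 0 => Set.subset_univ _
  | 1 => Set.subset_univ _
  | n + 2 => by
    rintro _ ⟨a, ha, b, rfl⟩
    exact ⟨a, sPow_succ_subset (n + 1) ha, b, rfl⟩

theorem base_subset_sPow {m : ℕ} (hm : 1 ≤ m) : Base S ⊆ SPow S m :=
  fun _ hx => hx m hm

theorem subset_sPow_of_forall_exists_eq_mul {T : Set S}
    (hT : ∀ t ∈ T, ∃ a ∈ T, ∃ b : S, t = a * b) : ∀ n : ℕ, T ⊆ SPow S n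
  | 0 => Set.subset_univ T
  | 1 => Set.subset_univ T
  | n + 2 => fun t ht => by
    obtain ⟨a, ha, b, rfl⟩ := hT t ht
    exact ⟨a, subset_sPow_of_forall_exists_eq_mul hT (n + 1) ha, b, rfl⟩

theorem subset_base_of_forall_exists_eq_mul {T : Set S}
    (hT : ∀ t ∈ T, ∃ a ∈ T, ∃ b : S, t = a * b) : T ⊆ Base S :=
  fun _ ht n _ => subset_sPow_of_forall_exists_eq_mul hT n ht

theorem stmt8_general {T : Set S} (hT : ∀ t ∈ T, ∃ a ∈ T, ∃ b : S, t = a * b)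
    {m : ℕ} (hm : 1 ≤ m) (hSm : SPow S m ⊆ T) :
    (∀ n : ℕ, m ≤ n → SPow S n = T) ∧ SPow S m = SPow S (m + 1) ∧ Base S = T := by
  have sPow_eq (n : ℕ) (hmn : m ≤ n) : SPow S n = T :=
    ((antitone_sPow hmn).trans hSm).antisymm (subset_sPow_of_forall_exists_eq_mul hT n)
  have base_eq : Base S = T :=
    ((base_subset_sPow hm).trans hSm).antisymm (subset_base_of_forall_exists_eq_mul hT)
  exact ⟨sPow_eq, (sPow_eq m le_rfl).trans (sPow_eq (m + 1) m.le_succ).symm, base_eq⟩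

end

/-- An ideal extension of a globally idempotent semigroup by a nilpotent semigroup
of finite index is a finitely stratified extension with base the ideal. -/
theorem stmt8 {S : Type*} [Semigroup S] (T : Set S)
    (hIdeal : ∀ t ∈ T, ∀ s : S, s * t ∈ T ∧ t * s ∈ T)
    (hGI : ∀ t ∈ T, ∃ a ∈ T, ∃ b ∈ T, t = a * b)
    (m : ℕ) (hm : 1 ≤ m) (hSm : SPow S m ⊆ T) :
    (∀ n : ℕ, m ≤ n → SPow S n = T) ∧ SPow S m = SPow S (m + 1) ∧ Base S = T :=
  stmt8_general (fun t ht => let ⟨a, ha, b, _, hab⟩ := hGI t ht; ⟨a, ha, b, hab⟩) hm hSm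
end

section
/- Let S be a conditionally completely regular semigroup and let a, b ∈ S be regular elements with a 𝒟 b. Then a*b 𝒟 a; consequently every regular 𝒟-class of S is closed under multiplication (and is a completely simple subsemigroup of S). -/
/-- Green's relation ℒ: `s ℒ t` iff `{s} ∪ Ss = {t} ∪ St`. -/
def LRel {S : Type*} [Semigroup S] (s t : S) : Prop :=
  ({s} ∪ {x | ∃ a : S, x = a * s} : Set S) = ({t} ∪ {x | ∃ a : S, x = a * t} : Set S)

/-- Green's relation ℛ: `s ℛ t` iff `{s} ∪ sS = {t} ∪ tS`. -/
def RRel {S : Type*} [Semigroup S] (s t : S) : Prop :=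
  ({s} ∪ {x | ∃ a : S, x = s * a} : Set S) = ({t} ∪ {x | ∃ a : S, x = t * a} : Set S)

/-- Green's relation ℋ = ℒ ∩ ℛ. -/
def HRel {S : Type*} [Semigroup S] (s t : S) : Prop := LRel s t ∧ RRel s t

/-- Green's relation 𝒟: `s 𝒟 t` iff `∃ u, s ℒ u` and `u ℛ t`. -/
def DRel {S : Type*} [Semigroup S] (s t : S) : Prop := ∃ u : S, LRel s u ∧ RRel u t

/-- An element `s` is regular if `s = s * x * s` for some `x`. -/
def IsRegularElem {S : Type*} [Semigroup S] (s : S) : Prop := ∃ x : S, s = s * x * s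

/-- `S` is conditionally completely regular if every regular element is
ℋ-related to an idempotent. -/
def CondCompletelyRegular (S : Type*) [Semigroup S] : Prop :=
  ∀ s : S, IsRegularElem s → ∃ e : S, e * e = e ∧ HRel s e

/-!
If `a ℒ u ℛ b` with `a` regular, then `u` is regular, so it is ℋ-related to an idempotent `e`, and
`a ℒ e ℛ b`. This is the Clifford–Miller condition: `e` is a right identity for its ℒ-class, so
`a * e = a`, and multiplying `e ℛ b` on the left by `a` gives `a ℛ a * b`.
-/

section Green

variable {S : Type*} [Semigroup S] {a b e s t u : S}

theorem LRel.symm (h : LRel s t) : LRel t s := Eq.symm h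

theorem LRel.trans (hst : LRel s t) (htu : LRel t u) : LRel s u := Eq.trans hst htu

theorem RRel.symm (h : RRel s t) : RRel t s := Eq.symm h

theorem RRel.trans (hst : RRel s t) (htu : RRel t u) : RRel s u := Eq.trans hst htu

theorem RRel.dRel (h : RRel s t) : DRel s t := ⟨s, rfl, h⟩

theorem LRel.eq_or_exists_eq_mul (h : LRel s t) : s = t ∨ ∃ c : S, s = c * t :=
  (Set.ext_iff.mp h s).mp (Or.inl rfl)

theorem LRel.mul_eq_left (h : LRel s t) (ht : t * e = t) : s * e = s := by
  rcases h.eq_or_exists_eq_mul with rfl | ⟨c, rfl⟩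
  · exact ht
  · rw [mul_assoc, ht]

theorem IsRegularElem.of_lRel (hs : IsRegularElem s) (h : LRel s t) : IsRegularElem t := by
  obtain ⟨x, hx⟩ := hs
  have ht : t * (x * s) = t := h.symm.mul_eq_left (by rw [← mul_assoc, ← hx])
  rcases h.eq_or_exists_eq_mul with rfl | ⟨d, rfl⟩
  · exact ⟨x, hx⟩
  · exact ⟨x * d, by simpa only [mul_assoc] using ht.symm⟩

theorem RRel.mul_left (h : RRel s t) (c : S) : RRel (c * s) (c * t) := by
  have image_mul_left (r : S) :
      (c * ·) '' ({r} ∪ {x | ∃ a : S, x = r * a}) = {c * r} ∪ {x | ∃ a : S, x = c * r * a} := by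
    ext x
    simp [mul_assoc, eq_comm]
  exact (image_mul_left s).symm.trans ((congrArg _ h).trans (image_mul_left t))

theorem rRel_mul_of_lRel_of_rRel (he : IsIdempotentElem e) (hae : LRel a e) (heb : RRel e b) :
    RRel (a * b) a := by
  have ha : a * e = a := hae.mul_eq_left he
  simpa only [ha] using (heb.mul_left a).symm

end Green

/-- In a conditionally completely regular semigroup, if `a, b` are regular and
`a 𝒟 b`, then `a * b 𝒟 a`: every regular 𝒟-class is closed under multiplication. -/
theorem stmt11 {S : Type*} [Semigroup S] (hS : CondCompletelyRegular S)
    (a b : S) (ha : IsRegularElem a) (hb : IsRegularElem b) (hab : DRel a b) :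
    DRel (a * b) a := by
  obtain ⟨u, hau, hub⟩ := hab
  obtain ⟨e, he, hue, hue'⟩ := hS u (ha.of_lRel hau)
  exact (rRel_mul_of_lRel_of_rRel he (hau.trans hue) (hue'.symm.trans hub)).dRel
end

section
/- Let S be an E-dense semigroup such that the set Reg(S) of regular elements is a completely simple subsemigroup of S (that is: Reg(S) is closed under multiplication, any two regular elements are 𝒟-related, and every regular element is ℋ-related to an idempotent). Then Reg(S) is a two-sided ideal of S: for every regular s ∈ S and every t ∈ S, both s*t and t*s are regular. -/
/-!
If an idempotent `e` satisfies `a ℒ e ℛ b`, then `a * b ℛ a` (Clifford–Miller). When the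
idempotents are all 𝒟-related and every regular element lies in a group ℋ-class, such an `e`
exists for any two idempotents `a` and `b`, so `a * b` always left-divides `a`. Now let
`s = s * x * s` be regular and choose `y` with `s * t * y` idempotent. As `s * x` fixes
`s * t * y` on the left, `s * t * y` left-divides `s * x`, and hence `s * t` left-divides `s`: this
means `s * t ℛ s`, and regularity is an ℛ-class property. The hypotheses are self-dual, so the
same argument in `Sᵐᵒᵖ` handles `t * s`.
-/

open MulOpposite

/-- `S` is E-dense if every element has a right multiple that is idempotent. By `EDense.op` the
notion is left-right symmetric. -/
def EDense (S : Type*) [Semigroup S] : Prop :=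
  ∀ s : S, ∃ t : S, IsIdempotentElem (s * t)

section Semigroup

variable {S : Type*} [Semigroup S] {a b e s t : S}

theorem rRel_iff_eq_or_dvd_and_dvd : RRel s t ↔ s = t ∨ s ∣ t ∧ t ∣ s := by
  constructor
  · intro h
    have hs : s = t ∨ t ∣ s := (Set.ext_iff.1 h s).1 (Or.inl rfl)
    have ht : t = s ∨ s ∣ t := (Set.ext_iff.1 h t).2 (Or.inl rfl)
    rcases hs with hst | hts
    · exact Or.inl hst
    · exact ht.imp Eq.symm (⟨·, hts⟩)
  · rintro (rfl | ⟨hst, hts⟩)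
    · rfl
    · ext x
      constructor
      · rintro (rfl | hx)
        exacts [Or.inr hts, Or.inr (hts.trans hx)]
      · rintro (rfl | hx)
        exacts [Or.inr hst, Or.inr (hst.trans hx)]

theorem LRel.mul_eq_self (h : LRel a e) (he : IsIdempotentElem e) : a * e = a := by
  have ha : a = e ∨ ∃ c, a = c * e := (Set.ext_iff.1 h a).1 (Or.inl rfl)
  rcases ha with rfl | ⟨c, rfl⟩
  · exact he
  · rw [mul_assoc, he]

theorem isRegularElem_of_isIdempotentElem (he : IsIdempotentElem e) : IsRegularElem e :=
  ⟨e, by rw [he, he]⟩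

theorem IsRegularElem.of_dvd_of_dvd (hs : IsRegularElem s) (hst : s ∣ t) (hts : t ∣ s) :
    IsRegularElem t := by
  obtain ⟨x, hx⟩ := hs
  obtain ⟨c, rfl⟩ := hst
  obtain ⟨d, hd⟩ := hts
  refine ⟨d * x, ?_⟩
  rw [← mul_assoc (s * c), ← hd, ← mul_assoc, ← hx]

theorem IsRegularElem.of_rRel (hs : IsRegularElem s) (h : RRel s t) : IsRegularElem t := by
  rcases rRel_iff_eq_or_dvd_and_dvd.1 h with rfl | ⟨hst, hts⟩
  exacts [hs, hs.of_dvd_of_dvd hst hts]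

theorem DRel.exists_isIdempotentElem (hS : CondCompletelyRegular S) (hb : IsRegularElem b)
    (h : DRel a b) : ∃ e, IsIdempotentElem e ∧ LRel a e ∧ RRel e b := by
  obtain ⟨u, hau, hub⟩ := h
  obtain ⟨e, he, hue⟩ := hS u (hb.of_rRel hub.symm)
  exact ⟨e, he, hau.trans hue.1, hue.2.symm.trans hub⟩

theorem mul_dvd_of_lRel_of_rRel (he : IsIdempotentElem e) (hae : LRel a e) (heb : RRel e b) :
    a * b ∣ a := by
  have hbe : b ∣ e := by
    rcases rRel_iff_eq_or_dvd_and_dvd.1 heb with rfl | ⟨-, hbe⟩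
    exacts [⟨e, he.symm⟩, hbe]
  calc a * b ∣ a * e := mul_dvd_mul_left a hbe
    _ = a := hae.mul_eq_self he

theorem IsRegularElem.mul_right (hs : IsRegularElem s) (hE : EDense S)
    (hS : CondCompletelyRegular S)
    (hD : ∀ e f : S, IsIdempotentElem e → IsIdempotentElem f → DRel e f) (t : S) :
    IsRegularElem (s * t) := by
  have ⟨x, hx⟩ := hs
  obtain ⟨y, hf⟩ := hE (s * t)
  have he : IsIdempotentElem (s * x) := by rw [IsIdempotentElem, ← mul_assoc, ← hx]
  have hef : s * x * (s * t * y) = s * t * y := by simp only [← mul_assoc, ← hx]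
  obtain ⟨g, hg, heg, hgf⟩ := (hD _ _ he hf).exists_isIdempotentElem hS
    (isRegularElem_of_isIdempotentElem hf)
  have hfe : s * t * y ∣ s * x := hef ▸ mul_dvd_of_lRel_of_rRel hg heg hgf
  have hsts : s * t ∣ s := calc
    s * t ∣ s * t * y := Dvd.intro y rfl
    _ ∣ s * x := hfe
    _ ∣ s * x * s := Dvd.intro s rfl
    _ = s := hx.symm
  exact hs.of_dvd_of_dvd (Dvd.intro t rfl) hsts

end Semigroup

section Opposite

variable {S : Type*} [Semigroup S] {s t : S}

theorem lRel_op_iff : LRel (op s) (op t) ↔ RRel s t := by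
  simp [LRel, RRel, Set.ext_iff, MulOpposite.forall, MulOpposite.exists, ← op_mul]

theorem rRel_op_iff : RRel (op s) (op t) ↔ LRel s t := by
  simp [LRel, RRel, Set.ext_iff, MulOpposite.forall, MulOpposite.exists, ← op_mul]

theorem DRel.op (h : DRel s t) : DRel (op t) (op s) := by
  obtain ⟨u, hsu, hut⟩ := h
  exact ⟨.op u, lRel_op_iff.2 hut.symm, rRel_op_iff.2 hsu.symm⟩

theorem isIdempotentElem_op_iff : IsIdempotentElem (op s) ↔ IsIdempotentElem s :=
  op_inj

theorem isRegularElem_op_iff : IsRegularElem (op s) ↔ IsRegularElem s := by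
  simp only [IsRegularElem, MulOpposite.exists, ← op_mul, op_inj, mul_assoc]

theorem CondCompletelyRegular.op (hS : CondCompletelyRegular S) :
    CondCompletelyRegular Sᵐᵒᵖ := by
  intro s hs
  obtain ⟨e, he, hL, hR⟩ := hS s.unop (isRegularElem_op_iff.1 hs)
  exact ⟨.op e, isIdempotentElem_op_iff.2 he, lRel_op_iff.2 hR, rRel_op_iff.2 hL⟩

theorem isIdempotentElem_mul_mul_mul (h : IsIdempotentElem (s * t)) :
    IsIdempotentElem (t * s * t * s) := by
  calc t * s * t * s * (t * s * t * s)
      = t * ((s * t) * (s * t) * (s * t)) * s := by simp only [mul_assoc]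
    _ = t * s * t * s := by rw [h, h, ← mul_assoc]

theorem EDense.op (hE : EDense S) : EDense Sᵐᵒᵖ := by
  intro s
  obtain ⟨t, ht⟩ := hE s.unop
  exact ⟨.op (t * s.unop * t), isIdempotentElem_op_iff.2 (isIdempotentElem_mul_mul_mul ht)⟩

end Opposite

/-- If `S` is E-dense and `Reg(S)` is a completely simple subsemigroup (closed
under multiplication, any two regular elements 𝒟-related, every regular element
ℋ-related to an idempotent), then `Reg(S)` is a two-sided ideal of `S`. -/
theorem stmt17 {S : Type*} [Semigroup S]
    (hEdense : ∀ s : S, ∃ t : S, (s * t) * (s * t) = s * t)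
    (hclosed : ∀ a b : S, IsRegularElem a → IsRegularElem b → IsRegularElem (a * b))
    (hsimple : ∀ a b : S, IsRegularElem a → IsRegularElem b → DRel a b)
    (hidem : ∀ a : S, IsRegularElem a → ∃ e : S, e * e = e ∧ HRel a e) :
    ∀ s t : S, IsRegularElem s → IsRegularElem (s * t) ∧ IsRegularElem (t * s) := by
  have hD (e f : S) (he : IsIdempotentElem e) (hf : IsIdempotentElem f) : DRel e f :=
    hsimple e f (isRegularElem_of_isIdempotentElem he) (isRegularElem_of_isIdempotentElem hf)
  have hDop (e f : Sᵐᵒᵖ) (he : IsIdempotentElem e) (hf : IsIdempotentElem f) : DRel e f :=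
    (hD f.unop e.unop (isIdempotentElem_op_iff.1 hf) (isIdempotentElem_op_iff.1 he)).op
  have hS : CondCompletelyRegular S := hidem
  have hE : EDense S := hEdense
  intro s t hs
  have hs_op : IsRegularElem (op s * op t) :=
    (isRegularElem_op_iff.2 hs).mul_right hE.op hS.op hDop (op t)
  exact ⟨hs.mul_right hE hS hD t, isRegularElem_op_iff.1 hs_op⟩
end
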